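/- Let X₁, X₂ be positive semidefinite operators on H^{⊗n} (dim H = d) each commuting with the tensor-permutation action of S_n, and let Σ̄_k denote the normalized projection onto the symmetric subspace of H^{⊗k} (i.e., Π^{(k)}/Tr Π^{(k)}). Then Tr(Σ̄_{2n}(X₁⊗X₂)) ≥ Tr(Σ̄_n (X₁X₂)) / (2n)^{d−1} ≥ 0. -/

import Mathlib

open scoped ComplexOrder BigOperators Kronecker

/-- The number of occurrences of each letter in a word. -/
def letterCount {d m : ℕ} (ι : Fin m → Fin d) (j : Fin d) : ℕ :=
  Fintype.card {i // ι i = j}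

/-- The kernel `γ!` on equal multi-indices `γ = γ'`, zero otherwise. -/
noncomputable def factorialKernel {d : ℕ} (γ γ' : Fin d → ℕ) : ℝ :=
  ∏ j, if γ j = γ' j then ((γ j).factorial : ℝ) else 0

/-- One-variable Gram vectors of the partially transposed factorial kernel. -/
noncomputable def gramCoeff (p : ℕ × ℕ) (a b : ℕ) : ℝ :=
  if a + p.2 = b + p.1 ∧ p.2 ≤ b then
    (a.factorial * b.factorial : ℝ) /
      (√(p.1.factorial * p.2.factorial) * (b - p.2).factorial)
  else 0

lemma gramCoeff_mul_sum {a b a' b' B : ℕ} (h : a + b = a' + b') (ha' : a' ≤ B) (e : ℕ) :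
    ∑ c ∈ Finset.range (B + 1), gramCoeff (c, e) a' b * gramCoeff (c, e) a b' =
      if e ≤ b then (a.factorial * b.factorial : ℝ) * (a'.choose (b - e) * b'.choose e) else 0 := by
  by_cases heb : e ≤ b
  swap
  · simp [gramCoeff, heb]
  rw [if_pos heb]
  by_cases hm : b - e ≤ a'
  swap
  · rw [Nat.choose_eq_zero_of_lt (by omega : a' < b - e)]
    simp only [Nat.cast_zero, zero_mul, mul_zero]
    refine Finset.sum_eq_zero fun c _ => ?_
    rw [gramCoeff, if_neg (by simp only; omega), zero_mul]
  obtain ⟨m, rfl⟩ := Nat.exists_eq_add_of_le heb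
  obtain ⟨c, rfl⟩ := Nat.exists_eq_add_of_le hm
  simp only [Nat.add_sub_cancel_left] at *
  rw [Finset.sum_eq_single c]
  · by_cases heb' : e ≤ b'
    · obtain ⟨m', rfl⟩ := Nat.exists_eq_add_of_le heb'
      obtain rfl : a = m' + c := by omega
      rw [gramCoeff, gramCoeff, if_pos (by simp only; omega), if_pos (by simp only; omega),
        Nat.cast_add_choose, Nat.cast_add_choose]
      simp only [Nat.add_sub_cancel_left]
      have hs : √((c.factorial : ℝ) * e.factorial) * √((c.factorial : ℝ) * e.factorial) =
        c.factorial * e.factorial := Real.mul_self_sqrt (by positivity)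
      have h1 : (c.factorial : ℝ) ≠ 0 := by positivity
      have h2 : (e.factorial : ℝ) ≠ 0 := by positivity
      have h3 : (m.factorial : ℝ) ≠ 0 := by positivity
      have h4 : (m'.factorial : ℝ) ≠ 0 := by positivity
      rw [div_mul_div_comm, mul_mul_mul_comm √_, hs]
      field_simp
    · rw [Nat.choose_eq_zero_of_lt (by omega : b' < e), gramCoeff, gramCoeff,
        if_neg (c := _ ∧ e ≤ b') (by simp only; omega)]
      simp
  · intro c' _ hc
    rw [gramCoeff, if_neg (by simp only; omega), zero_mul]
  · intro hc
    exact absurd (Finset.mem_range.2 (by omega)) hc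

lemma factorial_eq_sum_gramCoeff {a b a' b' B : ℕ} (ha' : a' ≤ B) (hb : b ≤ B) :
    (if a + b = a' + b' then ((a + b).factorial : ℝ) else 0) =
      ∑ p ∈ Finset.range (B + 1) ×ˢ Finset.range (B + 1),
        gramCoeff p a' b * gramCoeff p a b' := by
  by_cases h : a + b = a' + b'
  swap
  · rw [if_neg h, Finset.sum_eq_zero]
    intro p _
    by_cases h1 : a' + p.2 = b + p.1
    · rw [gramCoeff, gramCoeff, if_neg (c := a + p.2 = _ ∧ _) (by omega), mul_zero]
    · rw [gramCoeff, if_neg (by omega), zero_mul]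
  rw [if_pos h, Finset.sum_product_right]
  simp_rw [gramCoeff_mul_sum h ha']
  rw [← Finset.sum_filter]
  have hf : (Finset.range (B + 1)).filter (· ≤ b) = Finset.range (b + 1) := by
    ext e; simp; omega
  rw [hf, ← Finset.mul_sum]
  have hv : (∑ e ∈ Finset.range (b + 1), (a'.choose (b - e) * b'.choose e : ℝ)) =
      (a + b).choose b := by
    rw [h, add_comm a' b', Nat.add_choose_eq, Finset.Nat.sum_antidiagonal_eq_sum_range_succ_mk]
    push_cast
    exact Finset.sum_congr rfl fun _ _ => mul_comm _ _
  rw [hv, add_comm a b, Nat.cast_add_choose]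
  field_simp

lemma factorialKernel_add_eq_sum {d B : ℕ} {α β α' β' : Fin d → ℕ}
    (hα' : ∀ j, α' j ≤ B) (hβ : ∀ j, β j ≤ B) :
    factorialKernel (α + β) (α' + β') =
      ∑ q ∈ Fintype.piFinset fun _ : Fin d => Finset.range (B + 1) ×ˢ Finset.range (B + 1),
        (∏ j, gramCoeff (q j) (α' j) (β j)) * ∏ j, gramCoeff (q j) (α j) (β' j) := by
  simp only [factorialKernel, Pi.add_apply]
  simp_rw [fun j => factorial_eq_sum_gramCoeff (a := α j) (b' := β' j) (hα' j) (hβ j)]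
  rw [Finset.prod_univ_sum]
  simp_rw [Finset.prod_mul_distrib]

lemma factorialKernel_self {d : ℕ} (γ : Fin d → ℕ) :
    factorialKernel γ γ = ∏ j, ((γ j).factorial : ℝ) := by
  simp [factorialKernel]

lemma factorialKernel_of_ne {d : ℕ} {γ γ' : Fin d → ℕ} (h : γ ≠ γ') :
    factorialKernel γ γ' = 0 := by
  obtain ⟨j, hj⟩ := Function.ne_iff.1 h
  exact Finset.prod_eq_zero (Finset.mem_univ j) (if_neg hj)

lemma letterCount_le {d m : ℕ} (ι : Fin m → Fin d) (j : Fin d) : letterCount ι j ≤ m :=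
  (Fintype.card_subtype_le fun i => ι i = j).trans_eq (Fintype.card_fin m)

lemma letterCount_eq_sum {d m : ℕ} (ι : Fin m → Fin d) (j : Fin d) :
    letterCount ι j = ∑ i, if ι i = j then 1 else 0 := by
  simp [letterCount, Fintype.card_subtype]

lemma sum_letterCount {d m : ℕ} (ι : Fin m → Fin d) : ∑ j, letterCount ι j = m := by
  simp_rw [letterCount_eq_sum]
  rw [Finset.sum_comm]
  simp

lemma letterCount_cons {d m : ℕ} (k : Fin d) (ι : Fin m → Fin d) :
    letterCount (Fin.cons k ι : Fin (m + 1) → Fin d) = Pi.single k 1 + letterCount ι := by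
  ext j
  rw [Pi.add_apply, letterCount_eq_sum, letterCount_eq_sum, Fin.sum_univ_succ]
  simp [Pi.single_apply, eq_comm]

lemma letterCount_append {d m n : ℕ} (ι : Fin m → Fin d) (κ : Fin n → Fin d) :
    letterCount (Fin.append ι κ) = letterCount ι + letterCount κ := by
  ext j
  rw [Pi.add_apply, letterCount_eq_sum, letterCount_eq_sum, letterCount_eq_sum, Fin.sum_univ_add]
  simp only [Fin.append_left, Fin.append_right]

lemma letterCount_comp_perm {d m : ℕ} (ι : Fin m → Fin d) (π : Equiv.Perm (Fin m)) :
    letterCount (ι ∘ π) = letterCount ι := by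
  ext j
  simp only [letterCount_eq_sum, Function.comp]
  exact Equiv.sum_comp π fun i => if ι i = j then 1 else 0

lemma exists_perm_of_letterCount_eq {d m : ℕ} {ι κ : Fin m → Fin d}
    (h : letterCount ι = letterCount κ) : ∃ π : Equiv.Perm (Fin m), ι ∘ π = κ := by
  have e (j : Fin d) : {i // κ i = j} ≃ {i // ι i = j} :=
    Fintype.equivOfCardEq (congrFun h j).symm
  refine ⟨(Equiv.sigmaFiberEquiv κ).symm.trans
    ((Equiv.sigmaCongrRight e).trans (Equiv.sigmaFiberEquiv ι)), funext fun i => ?_⟩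
  exact (e (κ i) ⟨i, rfl⟩).2

lemma card_perm_comp_eq {d m : ℕ} (ι κ : Fin m → Fin d) :
    (Fintype.card {π : Equiv.Perm (Fin m) // ι ∘ π = κ} : ℝ) =
      factorialKernel (letterCount ι) (letterCount κ) := by
  by_cases h : letterCount ι = letterCount κ
  · obtain ⟨σ, rfl⟩ := exists_perm_of_letterCount_eq h
    rw [← h, factorialKernel_self]
    have e : {π : Equiv.Perm (Fin m) // ι ∘ π = ι ∘ σ} ≃ {π : Equiv.Perm (Fin m) // ι ∘ π = ι} :=
      (Equiv.mulRight σ⁻¹).subtypeEquiv fun π => by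
        constructor
        · intro hπ
          ext i
          have := congrFun hπ (σ⁻¹ i)
          simpa using congrArg Fin.val this
        · intro hπ
          ext i
          have := congrFun hπ (σ i)
          simpa using congrArg Fin.val this
    rw [Fintype.card_congr e, DomMulAct.stabilizer_card]
    push_cast
    rfl
  · rw [factorialKernel_of_ne h, Nat.cast_eq_zero, Fintype.card_eq_zero_iff]
    exact ⟨fun π => h (by rw [← π.2, letterCount_comp_perm])⟩

lemma sum_prod_factorial_add_letterCount {d : ℕ} (m : ℕ) (γ : Fin d → ℕ) :
    ∑ ι : Fin m → Fin d, ∏ j, ((γ j + letterCount ι j).factorial : ℝ) =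
      (∏ j, ((γ j).factorial : ℝ)) * (∑ j, γ j + d).ascFactorial m := by
  induction m generalizing γ with
  | zero => simp [letterCount_eq_sum]
  | succ m ih =>
    rw [← (Fin.consEquiv fun _ => Fin d).sum_comp, Fintype.sum_prod_type]
    have hstep (k : Fin d) (ι : Fin m → Fin d) (j : Fin d) :
        γ j + letterCount (Fin.consEquiv (fun _ => Fin d) (k, ι)) j =
          (γ + Pi.single k 1 : Fin d → ℕ) j + letterCount ι j := by
      change γ j + letterCount (Fin.cons k ι : Fin (m + 1) → Fin d) j = _
      rw [letterCount_cons]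
      simp [add_assoc]
    simp_rw [hstep, ih]
    have hprod (k : Fin d) : ∏ j, (((γ + Pi.single k 1 : Fin d → ℕ) j).factorial : ℝ) =
        (γ k + 1) * ∏ j, ((γ j).factorial : ℝ) := by
      rw [← Finset.mul_prod_erase _ _ (Finset.mem_univ k),
        ← Finset.mul_prod_erase _ (fun j => ((γ j).factorial : ℝ)) (Finset.mem_univ k), ← mul_assoc]
      congr 1
      · simp [Nat.factorial_succ]
      · refine Finset.prod_congr rfl fun j hj => ?_
        simp [Pi.single_eq_of_ne (Finset.ne_of_mem_erase hj)]
    have hsum (k : Fin d) : ∑ j, (γ + Pi.single k 1 : Fin d → ℕ) j + d = ∑ j, γ j + d + 1 := by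
      simp [Finset.sum_add_distrib, Finset.sum_pi_single']
      omega
    simp_rw [hprod, hsum]
    rw [← Finset.sum_mul, ← Finset.sum_mul, Nat.ascFactorial, ← Nat.succ_ascFactorial]
    simp [Finset.sum_add_distrib]
    ring

lemma sum_factorialKernel_add {d n : ℕ} (ι κ : Fin n → Fin d) :
    ∑ μ : Fin n → Fin d, factorialKernel (letterCount μ + letterCount κ)
      (letterCount ι + letterCount μ) =
      (n + d).ascFactorial n * factorialKernel (letterCount ι) (letterCount κ) := by
  by_cases h : letterCount ι = letterCount κ
  · simp_rw [h, add_comm (letterCount _) (letterCount κ), factorialKernel_self, Pi.add_apply,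
      sum_prod_factorial_add_letterCount, sum_letterCount]
    ring
  · rw [factorialKernel_of_ne h, mul_zero, Finset.sum_eq_zero]
    intro μ _
    refine factorialKernel_of_ne fun h' => h ?_
    rw [add_comm] at h'
    exact (add_right_cancel h').symm

/-- A Hermitian matrix with symmetric range that fixes every symmetric vector is the
symmetrizer, whose entries count permutations. -/
lemma symProj_apply {d m : ℕ} {P : Matrix (Fin m → Fin d) (Fin m → Fin d) ℂ}
    (hherm : P.IsHermitian)
    (hrange : ∀ (w : (Fin m → Fin d) → ℂ) (π : Equiv.Perm (Fin m)) (ι : Fin m → Fin d),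
      P.mulVec w (ι ∘ π) = P.mulVec w ι)
    (hfix : ∀ w : (Fin m → Fin d) → ℂ,
      (∀ (π : Equiv.Perm (Fin m)) (ι : Fin m → Fin d), w (ι ∘ π) = w ι) → P.mulVec w = w)
    (ι κ : Fin m → Fin d) :
    P ι κ = ((factorialKernel (letterCount ι) (letterCount κ) / m.factorial : ℝ) : ℂ) := by
  let S : Matrix (Fin m → Fin d) (Fin m → Fin d) ℂ := Matrix.of fun ι κ =>
    ((factorialKernel (letterCount ι) (letterCount κ) / m.factorial : ℝ) : ℂ)
  have hS (w : (Fin m → Fin d) → ℂ)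
      (hw : ∀ (π : Equiv.Perm (Fin m)) (ι : Fin m → Fin d), w (ι ∘ π) = w ι) :
      S.mulVec w = w := by
    ext ι
    have h1 : S.mulVec w ι = ∑ κ, ∑ π : Equiv.Perm (Fin m),
        if ι ∘ π = κ then w κ / m.factorial else 0 := by
      refine Finset.sum_congr rfl fun κ _ => ?_
      simp only [S, Matrix.of_apply, ← card_perm_comp_eq, Fintype.card_subtype]
      rw [← Finset.sum_filter, Finset.sum_const]
      simp
      ring
    rw [h1, Finset.sum_comm]
    simp [hw, Fintype.card_perm, mul_div_cancel₀, Nat.factorial_ne_zero]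
  have hSP : S * P = P := by
    ext ι κ
    have := congrFun (hS (P.mulVec (Pi.single κ 1)) (hrange _)) ι
    rw [Matrix.mulVec_mulVec] at this
    simpa using this
  have hPS : P * S = S := by
    ext ι κ
    have := congrFun (hfix (S.mulVec (Pi.single κ 1)) fun π ι => by
      simp [S, letterCount_comp_perm]) ι
    rw [Matrix.mulVec_mulVec] at this
    simpa using this
  have hSh : S.conjTranspose = S := by
    ext ι κ
    simp only [S, Matrix.conjTranspose_apply, Matrix.of_apply, RCLike.star_def, Complex.conj_ofReal]
    by_cases h : letterCount ι = letterCount κ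
    · rw [h]
    · rw [factorialKernel_of_ne h, factorialKernel_of_ne (Ne.symm h)]
  have : P = S := by
    have h := congrArg Matrix.conjTranspose hSP
    rwa [Matrix.conjTranspose_mul, hherm.eq, hSh, hPS, eq_comm] at h
  rw [this]
  rfl

lemma symProj_mul_mul_self {d m : ℕ} {P X : Matrix (Fin m → Fin d) (Fin m → Fin d) ℂ}
    (hrange : ∀ (w : (Fin m → Fin d) → ℂ) (π : Equiv.Perm (Fin m)) (ι : Fin m → Fin d),
      P.mulVec w (ι ∘ π) = P.mulVec w ι)
    (hfix : ∀ w : (Fin m → Fin d) → ℂ,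
      (∀ (π : Equiv.Perm (Fin m)) (ι : Fin m → Fin d), w (ι ∘ π) = w ι) → P.mulVec w = w)
    (hX : ∀ π : Equiv.Perm (Fin m),
      X.submatrix (fun ι : Fin m → Fin d => ι ∘ π) (fun κ : Fin m → Fin d => κ ∘ π) = X) :
    P * (X * P) = X * P := by
  ext ι κ
  have := congrFun (hfix (X.mulVec (P.mulVec (Pi.single κ 1))) fun π ι => by
    simp only [Matrix.mulVec, dotProduct]
    rw [← (Equiv.arrowCongr π.symm (Equiv.refl (Fin d))).sum_comp]
    refine Finset.sum_congr rfl fun μ _ => ?_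
    have h1 : (Equiv.arrowCongr π.symm (Equiv.refl (Fin d))) μ = μ ∘ π := rfl
    have h2 := hrange (Pi.single κ 1) π μ
    simp only [Matrix.mulVec, dotProduct] at h2
    rw [h1, h2]
    exact congrArg (· * _) (congrFun (congrFun (hX π) ι) μ)) ι
  rw [Matrix.mulVec_mulVec _ X P, Matrix.mulVec_mulVec] at this
  simpa using this

lemma norm_sq_sum_gram_le {I Q : Type*} [Fintype I] (R : Finset Q) (G : Q → I → ℝ)
    (M : I → I → ℝ) (hM : ∀ p p', M p p' = ∑ q ∈ R, G q p * G q p') (e : I → ℝ) (x : I → ℂ) :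
    ‖∑ p, x p * ((∑ p', M p p' * e p' : ℝ) : ℂ)‖ ^ 2 ≤
      (∑ p, ∑ p', M p p' * e p' * e p) *
        (∑ p, ∑ p', (M p p' : ℂ) * (x p * star (x p'))).re := by
  set ω : Q → ℝ := fun q => ∑ p, G q p * e p with hω
  set y : Q → ℂ := fun q => ∑ p, (G q p : ℂ) * x p with hy
  have hlin : ∑ p, x p * ((∑ p', M p p' * e p' : ℝ) : ℂ) = ∑ q ∈ R, (ω q : ℂ) * y q := by
    simp only [hM, hω, hy, Complex.ofReal_sum, Complex.ofReal_mul, Finset.mul_sum, Finset.sum_mul]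
    simp_rw [Finset.sum_comm (t := R)]
    refine Finset.sum_congr rfl fun q _ => Finset.sum_congr rfl fun p _ =>
      Finset.sum_congr rfl fun p' _ => by ring
  have hquad : ∑ p, ∑ p', M p p' * e p' * e p = ∑ q ∈ R, ω q ^ 2 := by
    simp only [hM, hω, pow_two, Finset.mul_sum, Finset.sum_mul]
    simp_rw [Finset.sum_comm (t := R)]
    refine Finset.sum_congr rfl fun q _ => Finset.sum_congr rfl fun p _ =>
      Finset.sum_congr rfl fun p' _ => by ring
  have hform : ∑ p, ∑ p', (M p p' : ℂ) * (x p * star (x p')) =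
      ((∑ q ∈ R, ‖y q‖ ^ 2 : ℝ) : ℂ) := by
    simp only [Complex.ofReal_sum, Complex.ofReal_pow, ← Complex.mul_conj', hM, hy, map_sum,
      map_mul, Complex.conj_ofReal, Complex.ofReal_mul, Finset.mul_sum, Finset.sum_mul,
      RCLike.star_def]
    simp_rw [Finset.sum_comm (t := R)]
    refine Finset.sum_congr rfl fun q _ => ?_
    rw [Finset.sum_comm]
    refine Finset.sum_congr rfl fun p _ => Finset.sum_congr rfl fun p' _ => by ring
  rw [hlin, hquad, hform, Complex.ofReal_re]
  calc ‖∑ q ∈ R, (ω q : ℂ) * y q‖ ^ 2 ≤ (∑ q ∈ R, |ω q| * ‖y q‖) ^ 2 := by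
        gcongr
        refine (norm_sum_le _ _).trans_eq (Finset.sum_congr rfl fun q _ => ?_)
        rw [norm_mul, Complex.norm_real, Real.norm_eq_abs]
    _ ≤ _ := by
        simpa using Finset.sum_mul_sq_le_sq_mul_sq R (fun q => |ω q|) fun q => ‖y q‖

/-- The kernel of the symmetrizer on words of length `n + n`, partially transposed in the second
half and without its normalization. -/
noncomputable def transposedKernel {d n : ℕ} (p p' : (Fin n → Fin d) × (Fin n → Fin d)) : ℝ :=
  factorialKernel (letterCount p'.1 + letterCount p.2) (letterCount p.1 + letterCount p'.2)

lemma norm_sq_le_transposedKernel {d n : ℕ} (x : (Fin n → Fin d) × (Fin n → Fin d) → ℂ) :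
    ((n + d).ascFactorial n : ℝ) *
        ‖∑ p, x p * (factorialKernel (letterCount p.1) (letterCount p.2) : ℂ)‖ ^ 2 ≤
      d.ascFactorial n *
        (∑ p, ∑ p', (transposedKernel p p' : ℂ) * (x p * star (x p'))).re := by
  let e : (Fin n → Fin d) × (Fin n → Fin d) → ℝ := fun p => if p.1 = p.2 then 1 else 0
  have hrow (p : (Fin n → Fin d) × (Fin n → Fin d)) : ∑ p', transposedKernel p p' * e p' =
      (n + d).ascFactorial n * factorialKernel (letterCount p.1) (letterCount p.2) := by
    rw [← sum_factorialKernel_add, Fintype.sum_prod_type]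
    simp [e, transposedKernel]
  have htot : ∑ p, ∑ p', transposedKernel (n := n) (d := d) p p' * e p' * e p =
      (n + d).ascFactorial n * d.ascFactorial n := by
    simp_rw [← Finset.sum_mul, hrow]
    rw [Fintype.sum_prod_type]
    have := sum_prod_factorial_add_letterCount n (0 : Fin d → ℕ)
    simp only [Pi.zero_apply, zero_add, Nat.factorial_zero, Nat.cast_one, Finset.prod_const_one,
      one_mul, Finset.sum_const_zero] at this
    simp [e, factorialKernel_self, ← Finset.mul_sum, this]
  have h := norm_sq_sum_gram_le
    (Fintype.piFinset fun _ : Fin d => Finset.range (n + 1) ×ˢ Finset.range (n + 1))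
    (fun q (p : (Fin n → Fin d) × (Fin n → Fin d)) =>
      ∏ j, gramCoeff (q j) (letterCount p.1 j) (letterCount p.2 j)) transposedKernel
    (fun p p' => by
      rw [transposedKernel]
      exact factorialKernel_add_eq_sum (letterCount_le p.1) (letterCount_le p.2)) e x
  rw [htot] at h
  simp_rw [hrow, Complex.ofReal_mul, mul_left_comm (x _), ← Finset.mul_sum] at h
  rw [norm_mul, mul_pow] at h
  have hpos : (0 : ℝ) < (n + d).ascFactorial n := by
    rcases Nat.eq_zero_or_pos (n + d) with h0 | h0
    · obtain rfl : n = 0 := by omega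
      simp
    · obtain ⟨k, hk⟩ := Nat.exists_eq_succ_of_ne_zero h0.ne'
      rw [hk]
      exact_mod_cast Nat.ascFactorial_pos k n
  simp only [Complex.ofReal_natCast, Complex.norm_natCast] at h
  refine le_of_mul_le_mul_left ?_ hpos
  rw [← mul_assoc, ← mul_assoc]
  simpa [pow_two] using h

lemma ascFactorial_eq_choose_mul (d m : ℕ) (hd : 0 < d) :
    d.ascFactorial m = m.factorial * (m + d - 1).choose m := by
  obtain ⟨k, rfl⟩ := Nat.exists_eq_succ_of_ne_zero hd.ne'
  rw [Nat.succ_eq_add_one, Nat.ascFactorial_eq_factorial_mul_choose]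
  congr 2
  omega

lemma choose_le_two_mul_pow (d n : ℕ) (hd : 0 < d) (hn : 0 < n) :
    (n + d - 1).choose n ≤ (2 * n) ^ (d - 1) := by
  obtain ⟨k, rfl⟩ := Nat.exists_eq_succ_of_ne_zero hd.ne'
  simp only [Nat.succ_eq_add_one, Nat.add_sub_cancel, ← add_assoc]
  induction k with
  | zero => simp
  | succ k ih =>
    have h : (n + (k + 1)).choose n * (k + 1) = (n + k).choose n * (n + k + 1) := by
      have := Nat.choose_mul_succ_eq (n + k) n
      rw [this, show n + k + 1 - n = k + 1 by omega]
      rfl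
    refine Nat.le_of_mul_le_mul_right (c := k + 1) ?_ k.succ_pos
    rw [h, pow_succ, mul_assoc]
    exact Nat.mul_le_mul (ih k.succ_pos) (by nlinarith)

lemma trace_symProj_mul_kronecker {d n : ℕ}
    {P : Matrix (Fin (n + n) → Fin d) (Fin (n + n) → Fin d) ℂ}
    (hP : ∀ a b, P a b =
      ((factorialKernel (letterCount a) (letterCount b) / (n + n).factorial : ℝ) : ℂ))
    (X₁ X₂ : Matrix (Fin n → Fin d) (Fin n → Fin d) ℂ) :
    (P * ((X₁ ⊗ₖ X₂).submatrix
      (fun ι : Fin (n + n) → Fin d =>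
        (fun i : Fin n => ι (Fin.castAdd n i), fun i : Fin n => ι (Fin.natAdd n i)))
      (fun κ : Fin (n + n) → Fin d =>
        (fun i : Fin n => κ (Fin.castAdd n i), fun i : Fin n => κ (Fin.natAdd n i))))).trace =
      (∑ p, ∑ p', (transposedKernel p p' : ℂ) * (X₁ p.1 p'.1 * X₂ p'.2 p.2)) /
        (n + n).factorial := by
  simp only [Matrix.trace, Matrix.diag_apply, Matrix.mul_apply, Matrix.submatrix_apply,
    Matrix.kroneckerMap_apply, hP]
  have happ (ι κ : Fin n → Fin d) : Fin.appendEquiv n n (ι, κ) = Fin.append ι κ := rfl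
  rw [← (Fin.appendEquiv n n).sum_comp]
  simp_rw [← (Fin.appendEquiv n n).sum_comp (M := ℂ)]
  simp only [Fintype.sum_prod_type, happ, Fin.append_left, Fin.append_right, letterCount_append,
    transposedKernel, Finset.sum_div]
  rw [Finset.sum_congr rfl fun ι _ => Finset.sum_comm, Finset.sum_comm]
  refine Finset.sum_congr rfl fun ι' _ => ?_
  rw [Finset.sum_comm]
  refine Finset.sum_congr rfl fun κ _ => Finset.sum_congr rfl fun ι _ =>
    Finset.sum_congr rfl fun κ' _ => ?_
  push_cast
  ring

lemma sum_norm_sq_conjTranspose_mul_mul {m : Type*} [Fintype m] (A B P : Matrix m m ℂ)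
    (hherm : P.IsHermitian)
    (hA : P * ((A * A.conjTranspose) * P) = (A * A.conjTranspose) * P) :
    ∑ s, ∑ r, ‖(A.conjTranspose * P * B) s r‖ ^ 2 =
      (P * ((A * A.conjTranspose) * (B * B.conjTranspose))).trace.re := by
  have hcomm : P * (A * A.conjTranspose) = P * (A * A.conjTranspose * P) := by
    have h := congrArg Matrix.conjTranspose hA
    simp only [Matrix.conjTranspose_mul, Matrix.conjTranspose_conjTranspose, hherm.eq] at h
    simpa only [Matrix.mul_assoc] using h.symm
  have htr : (P * ((A * A.conjTranspose) * (B * B.conjTranspose))).trace =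
      ((A.conjTranspose * P * B) * (A.conjTranspose * P * B).conjTranspose).trace := by
    rw [← Matrix.mul_assoc, hcomm, Matrix.conjTranspose_mul, Matrix.conjTranspose_mul,
      Matrix.conjTranspose_conjTranspose, hherm.eq]
    simp only [Matrix.mul_assoc]
    rw [Matrix.trace_mul_comm P, Matrix.mul_assoc, Matrix.trace_mul_comm A]
    simp only [Matrix.mul_assoc]
  rw [htr, Matrix.trace, Complex.re_sum]
  refine Finset.sum_congr rfl fun s _ => ?_
  rw [Matrix.diag_apply, Matrix.mul_apply, Complex.re_sum]
  refine Finset.sum_congr rfl fun r _ => ?_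
  rw [Matrix.conjTranspose_apply, RCLike.star_def, Complex.mul_conj', ← Complex.ofReal_pow,
    Complex.ofReal_re]

lemma exists_eq_mul_conjTranspose {m : Type*} [Fintype m] {X : Matrix m m ℂ}
    (hX : X.PosSemidef) : ∃ A : Matrix m m ℂ, X = A * A.conjTranspose := by
  classical
  open scoped MatrixOrder Matrix.Norms.L2Operator in
  obtain ⟨B, hB⟩ := CStarAlgebra.nonneg_iff_eq_star_mul_self.1 hX.nonneg
  exact ⟨B.conjTranspose, by rw [Matrix.conjTranspose_conjTranspose]; exact hB⟩

lemma sum_norm_sq_le_sum_transposedKernel {d n : ℕ}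
    {P : Matrix (Fin n → Fin d) (Fin n → Fin d) ℂ}
    (hP : ∀ a b, P a b =
      ((factorialKernel (letterCount a) (letterCount b) / n.factorial : ℝ) : ℂ))
    (A B : Matrix (Fin n → Fin d) (Fin n → Fin d) ℂ) :
    ((n + d).ascFactorial n : ℝ) * n.factorial ^ 2 *
        ∑ s, ∑ r, ‖(A.conjTranspose * P * B) s r‖ ^ 2 ≤
      d.ascFactorial n * (∑ p, ∑ p', (transposedKernel p p' : ℂ) *
        ((A * A.conjTranspose) p.1 p'.1 * (B * B.conjTranspose) p'.2 p.2)).re := by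
  have hentry (s r) : (n.factorial : ℝ) * ‖(A.conjTranspose * P * B) s r‖ =
      ‖∑ p : (Fin n → Fin d) × (Fin n → Fin d), (A p.1 s * star (B p.2 r)) *
        (factorialKernel (letterCount p.1) (letterCount p.2) : ℂ)‖ := by
    rw [← norm_star (∑ p : (Fin n → Fin d) × (Fin n → Fin d), _),
      ← Complex.norm_natCast (n.factorial), ← norm_mul]
    congr 1
    rw [Matrix.mul_apply, Fintype.sum_prod_type, Finset.sum_comm, star_sum, Finset.mul_sum]
    refine Finset.sum_congr rfl fun κ _ => ?_
    rw [Matrix.mul_apply, star_sum, Finset.sum_mul, Finset.mul_sum]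
    refine Finset.sum_congr rfl fun ι _ => ?_
    have : (n.factorial : ℂ) ≠ 0 := by exact_mod_cast n.factorial_ne_zero
    rw [hP, Matrix.conjTranspose_apply]
    simp only [star_mul', RCLike.star_def, Complex.conj_conj, Complex.conj_ofReal, Complex.ofReal_div,
      Complex.ofReal_natCast]
    field_simp
  have hsum : ∑ p, ∑ p', (transposedKernel p p' : ℂ) *
        ((A * A.conjTranspose) p.1 p'.1 * (B * B.conjTranspose) p'.2 p.2) =
      ∑ s, ∑ r, ∑ p, ∑ p', (transposedKernel p p' : ℂ) *
        ((A p.1 s * star (B p.2 r)) * star (A p'.1 s * star (B p'.2 r))) := by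
    simp_rw [Matrix.mul_apply, Matrix.conjTranspose_apply, Finset.sum_mul_sum]
    rw [← Fintype.sum_prod_type' (f := fun s r => ∑ p, ∑ p', (transposedKernel p p' : ℂ) *
      ((A p.1 s * star (B p.2 r)) * star (A p'.1 s * star (B p'.2 r)))), ← Finset.sum_comm_cycle]
    refine Finset.sum_congr rfl fun p _ => Finset.sum_congr rfl fun p' _ => ?_
    rw [Fintype.sum_prod_type, Finset.mul_sum]
    refine Finset.sum_congr rfl fun s _ => ?_
    rw [Finset.mul_sum]
    refine Finset.sum_congr rfl fun r _ => ?_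
    rw [star_mul', star_star]
    ring
  rw [hsum, Complex.re_sum, Finset.mul_sum, Finset.mul_sum]
  refine Finset.sum_le_sum fun s _ => ?_
  rw [Complex.re_sum, Finset.mul_sum, Finset.mul_sum]
  refine Finset.sum_le_sum fun r _ => ?_
  rw [mul_assoc, ← mul_pow, hentry]
  exact norm_sq_le_transposedKernel _

/-- Quantitative lower bound for the biriffle pairing: for positive semidefinite,
`S_n`-invariant operators `X₁, X₂` on `H^{⊗n}`, with `Σ̄_k` the normalized projection onto the
symmetric subspace of `H^{⊗k}` (here characterized by the hypotheses on `Pn` and `P2`),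
`Tr(Σ̄_{2n}(X₁ ⊗ X₂)) ≥ Tr(Σ̄_n(X₁X₂)) / (2n)^{d−1} ≥ 0`. -/
theorem biriffle_trace_lower_bound (d n : ℕ) (hd : 0 < d) (hn : 0 < n)
    (X₁ X₂ : Matrix (Fin n → Fin d) (Fin n → Fin d) ℂ)
    (hX₁ : X₁.PosSemidef) (hX₂ : X₂.PosSemidef)
    (hinv₁ : ∀ π : Equiv.Perm (Fin n),
      X₁.submatrix (fun ι : Fin n → Fin d => ι ∘ π) (fun κ : Fin n → Fin d => κ ∘ π) = X₁)
    (hinv₂ : ∀ π : Equiv.Perm (Fin n),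
      X₂.submatrix (fun ι : Fin n → Fin d => ι ∘ π) (fun κ : Fin n → Fin d => κ ∘ π) = X₂)
    (Pn : Matrix (Fin n → Fin d) (Fin n → Fin d) ℂ)
    (hPnherm : Pn.IsHermitian)
    (hPnrange : ∀ (w : (Fin n → Fin d) → ℂ) (π : Equiv.Perm (Fin n)) (ι : Fin n → Fin d),
      Pn.mulVec w (ι ∘ π) = Pn.mulVec w ι)
    (hPnfix : ∀ w : (Fin n → Fin d) → ℂ,
      (∀ (π : Equiv.Perm (Fin n)) (ι : Fin n → Fin d), w (ι ∘ π) = w ι) → Pn.mulVec w = w)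
    (P2 : Matrix (Fin (n + n) → Fin d) (Fin (n + n) → Fin d) ℂ)
    (hP2herm : P2.IsHermitian)
    (hP2range : ∀ (w : (Fin (n + n) → Fin d) → ℂ) (π : Equiv.Perm (Fin (n + n)))
        (ι : Fin (n + n) → Fin d), P2.mulVec w (ι ∘ π) = P2.mulVec w ι)
    (hP2fix : ∀ w : (Fin (n + n) → Fin d) → ℂ,
      (∀ (π : Equiv.Perm (Fin (n + n))) (ι : Fin (n + n) → Fin d), w (ι ∘ π) = w ι) →
        P2.mulVec w = w) :
    0 ≤ (Pn * (X₁ * X₂)).trace.re / ((n + d - 1).choose n : ℝ) / ((2 * n : ℝ)) ^ (d - 1) ∧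
    (Pn * (X₁ * X₂)).trace.re / ((n + d - 1).choose n : ℝ) / ((2 * n : ℝ)) ^ (d - 1)
      ≤ (P2 * ((X₁ ⊗ₖ X₂).submatrix
            (fun ι : Fin (n + n) → Fin d =>
              (fun i : Fin n => ι (Fin.castAdd n i), fun i : Fin n => ι (Fin.natAdd n i)))
            (fun κ : Fin (n + n) → Fin d =>
              (fun i : Fin n => κ (Fin.castAdd n i), fun i : Fin n => κ (Fin.natAdd n i))))).trace.re
          / ((n + n + d - 1).choose (n + n) : ℝ) := by
  obtain ⟨A, rfl⟩ := exists_eq_mul_conjTranspose hX₁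
  obtain ⟨B, rfl⟩ := exists_eq_mul_conjTranspose hX₂
  have hT := sum_norm_sq_conjTranspose_mul_mul A B Pn hPnherm
    (symProj_mul_mul_self hPnrange hPnfix hinv₁)
  have hle := sum_norm_sq_le_sum_transposedKernel (symProj_apply hPnherm hPnrange hPnfix) A B
  rw [trace_symProj_mul_kronecker (symProj_apply hP2herm hP2range hP2fix), ← hT]
  set T := ∑ s, ∑ r, ‖(A.conjTranspose * Pn * B) s r‖ ^ 2
  have hT0 : 0 ≤ T := by positivity
  refine ⟨by positivity, ?_⟩
  set Q := ∑ p, ∑ p', (transposedKernel p p' : ℂ) *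
    ((A * A.conjTranspose) p.1 p'.1 * (B * B.conjTranspose) p'.2 p.2)
  rw [← Complex.ofReal_natCast, Complex.div_ofReal_re, div_div, div_div]
  have hDn : (d.ascFactorial n : ℝ) = n.factorial * (n + d - 1).choose n := by
    exact_mod_cast ascFactorial_eq_choose_mul d n hd
  have hD2 : (d.ascFactorial n : ℝ) * (n + d).ascFactorial n =
      (n + n).factorial * (n + n + d - 1).choose (n + n) := by
    have h := Nat.ascFactorial_mul_ascFactorial d n n
    rw [add_comm d n] at h
    exact_mod_cast h.trans (ascFactorial_eq_choose_mul d (n + n) hd)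
  have hpow : ((n + d - 1).choose n : ℝ) ≤ (2 * n : ℝ) ^ (d - 1) := by
    exact_mod_cast choose_le_two_mul_pow d n hd hn
  rw [← hD2]
  have hf : (0 : ℝ) < n.factorial := by positivity
  have hc : (0 : ℝ) < (n + d - 1).choose n := by
    exact_mod_cast Nat.choose_pos (by omega)
  have ha : (0 : ℝ) < (n + d).ascFactorial n := by
    have h := ascFactorial_eq_choose_mul (n + d) n (by omega)
    rw [h]
    exact_mod_cast Nat.mul_pos n.factorial_pos (Nat.choose_pos (by omega))
  calc T / ((n + d - 1).choose n * (2 * n : ℝ) ^ (d - 1))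
      ≤ T / ((n + d - 1).choose n * (n + d - 1).choose n) := by gcongr
    _ ≤ Q.re / (d.ascFactorial n * (n + d).ascFactorial n) := by
      rw [hDn] at hle ⊢
      rw [div_le_div_iff₀ (by positivity) (by positivity)]
      refine le_of_mul_le_mul_left ?_ hf
      calc _ = (n + d - 1).choose n * ((n + d).ascFactorial n * n.factorial ^ 2 * T) := by ring
        _ ≤ (n + d - 1).choose n * (n.factorial * (n + d - 1).choose n * Q.re) := by gcongr
        _ = _ := by ring
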